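/- arXiv:2210.06062 — 8 statements merged into one kernel-verified Lean document; each statement's English description precedes it below -/
import Mathlib

section
/- Let f and g be real-valued functions on ℝ, both specularly differentiable at a point x₀ ∈ ℝ. Then f + g is specularly differentiable at x₀, and the phototangent of f + g at x₀ equals the pointwise sum of the phototangent of f at x₀ and the phototangent of g at x₀. -/
open Filter Topology Set

/-- The combination function `A(α,β)` from the paper: the slope of the specular
tangent determined by one-sided slopes `α` (right) and `β` (left). -/
noncomputable def specA (α β : ℝ) : ℝ :=
  if α + β = 0 then 0
  else (α * β - 1 + Real.sqrt ((α ^ 2 + 1) * (β ^ 2 + 1))) / (α + β)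

/-- `HasSpecData f x₀ L α β` means: the left and right limits of `f` at `x₀` both
exist and are equal to `L`, the right specular derivative of `f` at `x₀` is `α`,
and the left specular derivative of `f` at `x₀` is `β`. -/
def HasSpecData (f : ℝ → ℝ) (x₀ L α β : ℝ) : Prop :=
  Tendsto f (𝓝[<] x₀) (𝓝 L) ∧ Tendsto f (𝓝[>] x₀) (𝓝 L) ∧
    Tendsto (fun x => (f x - L) / (x - x₀)) (𝓝[>] x₀) (𝓝 α) ∧
    Tendsto (fun x => (f x - L) / (x - x₀)) (𝓝[<] x₀) (𝓝 β)

/-- `f` is specularly differentiable at `x₀`. -/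
def SpecDifferentiableAt (f : ℝ → ℝ) (x₀ : ℝ) : Prop :=
  ∃ L α β, HasSpecData f x₀ L α β

/-- `f` is specularly differentiable at `x₀` with specular derivative `d`. -/
def HasSpecDerivAt (f : ℝ → ℝ) (x₀ d : ℝ) : Prop :=
  ∃ L α β, HasSpecData f x₀ L α β ∧ d = specA α β
/-- The phototangent determined by point `x₀`, left limit `l`, right limit `r`,
left specular derivative `dm`, and right specular derivative `dp`. -/
noncomputable def phtFun (x₀ l r dm dp : ℝ) : ℝ → ℝ := fun y =>
  if y < x₀ then dm * (y - x₀) + l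
  else if y = x₀ then (l + r) / 2
  else dp * (y - x₀) + r

theorem tendsto_add_sub_add_div {α K : Type*} [DivisionRing K] [TopologicalSpace K]
    [ContinuousAdd K] {l : Filter α} {f g d : α → K} {a b p q : K}
    (hf : Tendsto (fun x => (f x - a) / d x) l (𝓝 p))
    (hg : Tendsto (fun x => (g x - b) / d x) l (𝓝 q)) :
    Tendsto (fun x => ((f + g) x - (a + b)) / d x) l (𝓝 (p + q)) := by
  simpa only [Pi.add_apply, add_sub_add_comm, add_div] using hf.add hg

namespace HasSpecData

variable {f g : ℝ → ℝ} {x₀ L α β M γ δ : ℝ}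

theorem specDifferentiableAt (hf : HasSpecData f x₀ L α β) : SpecDifferentiableAt f x₀ :=
  ⟨L, α, β, hf⟩

theorem add (hf : HasSpecData f x₀ L α β) (hg : HasSpecData g x₀ M γ δ) :
    HasSpecData (f + g) x₀ (L + M) (α + γ) (β + δ) := by
  obtain ⟨hf_left, hf_right, hf_deriv_right, hf_deriv_left⟩ := hf
  obtain ⟨hg_left, hg_right, hg_deriv_right, hg_deriv_left⟩ := hg
  exact ⟨hf_left.add hg_left, hf_right.add hg_right,
    tendsto_add_sub_add_div hf_deriv_right hg_deriv_right,
    tendsto_add_sub_add_div hf_deriv_left hg_deriv_left⟩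

end HasSpecData

theorem phtFun_add (x₀ l r dm dp l' r' dm' dp' : ℝ) :
    phtFun x₀ (l + l') (r + r') (dm + dm') (dp + dp') =
      phtFun x₀ l r dm dp + phtFun x₀ l' r' dm' dp' := by
  funext y
  simp only [phtFun, Pi.add_apply]
  split_ifs <;> ring

theorem specular_add (f g : ℝ → ℝ) (x₀ : ℝ) (Lf αf βf Lg αg βg : ℝ)
    (hf : HasSpecData f x₀ Lf αf βf) (hg : HasSpecData g x₀ Lg αg βg) :
    SpecDifferentiableAt (f + g) x₀ ∧
      HasSpecData (f + g) x₀ (Lf + Lg) (αf + αg) (βf + βg) ∧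
      ∀ y, phtFun x₀ Lf Lf βf αf y + phtFun x₀ Lg Lg βg αg y
        = phtFun x₀ (Lf + Lg) (Lf + Lg) (βf + βg) (αf + αg) y := by
  have hfg := hf.add hg
  refine ⟨hfg.specDifferentiableAt, hfg, fun y => ?_⟩
  rw [phtFun_add, Pi.add_apply]
end

section
/- (Specular Derivatives Criterion) Let f : ℝ → ℝ be specularly differentiable at x ∈ ℝ. Then f^S(x) = lim_{h→0} [ (f(x+h) − f[x])·√((f(x−h) − f[x])² + h²) − (f(x−h) − f[x])·√((f(x+h) − f[x])² + h²) ] / [ h·√((f(x−h) − f[x])² + h²) + h·√((f(x+h) − f[x])² + h²) ]. -/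
open Filter Topology Set

/-!
The number `specA α β` is the slope of the sum of the unit vectors along `(1, α)` and `(1, β)`, that
is, of the bisector of two rays of slopes `α` and `β`. Being unchanged when both vectors are
rescaled by a common factor, this slope can be computed from the secant vectors `(h, f (x + h) - L)`
and `(h, L - f (x - h))`, which gives the quotient in the criterion. That quotient is even in `h`,
so the limit is only needed from the right, where it follows from the continuity of `specA`.
-/

section OrderedGroup

variable {G : Type*} [AddCommGroup G] [PartialOrder G] [IsOrderedAddMonoid G]
  [TopologicalSpace G]

lemma tendsto_const_add_nhdsGT_zero [ContinuousAdd G] (x : G) :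
    Tendsto (fun h => x + h) (𝓝[>] 0) (𝓝[>] x) := by
  have hcont : ContinuousWithinAt (fun h => x + h) (Ioi 0) 0 := by fun_prop
  simpa only [add_zero] using
    hcont.tendsto_nhdsWithin fun _ hh => mem_Ioi.2 (lt_add_of_pos_right x hh)

lemma tendsto_const_sub_nhdsGT_zero [ContinuousSub G] (x : G) :
    Tendsto (fun h => x - h) (𝓝[>] 0) (𝓝[<] x) := by
  have hcont : ContinuousWithinAt (fun h => x - h) (Ioi 0) 0 := by fun_prop
  simpa only [sub_zero] using
    hcont.tendsto_nhdsWithin fun _ hh => mem_Iio.2 (sub_lt_self x hh)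

end OrderedGroup

lemma tendsto_nhdsNE_zero_iff_of_even {G X : Type*} [AddCommGroup G] [LinearOrder G]
    [IsOrderedAddMonoid G] [TopologicalSpace G] [ContinuousNeg G] {g : G → X} {l : Filter X}
    (hg : g.Even) : Tendsto g (𝓝[≠] 0) l ↔ Tendsto g (𝓝[>] 0) l := by
  refine ⟨fun hright => hright.mono_left (nhdsGT_le_nhdsNE 0), fun hright => ?_⟩
  have hneg : Tendsto Neg.neg (𝓝[<] (0 : G)) (𝓝[>] 0) := by
    simpa only [neg_zero] using tendsto_neg_nhdsLT (a := (0 : G))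
  have hleft : Tendsto g (𝓝[<] 0) l := by
    simpa only [Function.comp_def, hg _] using hright.comp hneg
  rw [← nhdsLT_sup_nhdsGT]
  exact hleft.sup hright

lemma sqrt_div_sq_add_one (a : ℝ) {h : ℝ} (hh : h ≠ 0) :
    √((a / h) ^ 2 + 1) = √(a ^ 2 + h ^ 2) / |h| := by
  rw [← Real.sqrt_sq_eq_abs, ← Real.sqrt_div (by positivity), div_pow,
    div_add_one (by positivity)]

lemma specA_comm (α β : ℝ) : specA α β = specA β α := by
  simp only [specA, add_comm, mul_comm]

lemma specA_eq_div_sqrt_add_sqrt (α β : ℝ) :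
    specA α β =
      (α * √(β ^ 2 + 1) + β * √(α ^ 2 + 1)) / (√(β ^ 2 + 1) + √(α ^ 2 + 1)) := by
  unfold specA
  split_ifs with hsum
  · obtain rfl : β = -α := by linarith
    simp
  · have hα : √(α ^ 2 + 1) ^ 2 = α ^ 2 + 1 := Real.sq_sqrt (by positivity)
    have hβ : √(β ^ 2 + 1) ^ 2 = β ^ 2 + 1 := Real.sq_sqrt (by positivity)
    rw [Real.sqrt_mul (by positivity), div_eq_div_iff hsum (by positivity)]
    linear_combination √(β ^ 2 + 1) * hα + √(α ^ 2 + 1) * hβ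

lemma continuous_specA : Continuous fun p : ℝ × ℝ => specA p.1 p.2 := by
  simp only [specA_eq_div_sqrt_add_sqrt]
  exact .div (by fun_prop) (by fun_prop) fun _ => by positivity

lemma specA_div_div (a b : ℝ) {h : ℝ} (hh : h ≠ 0) :
    specA (a / h) (b / h) =
      (a * √(b ^ 2 + h ^ 2) + b * √(a ^ 2 + h ^ 2)) /
        (h * √(b ^ 2 + h ^ 2) + h * √(a ^ 2 + h ^ 2)) := by
  rw [specA_eq_div_sqrt_add_sqrt, sqrt_div_sq_add_one a hh, sqrt_div_sq_add_one b hh]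
  field_simp

lemma even_specA_difference_quotients (f : ℝ → ℝ) (x L : ℝ) :
    Function.Even fun h => specA ((f (x + h) - L) / h) ((L - f (x - h)) / h) := by
  intro h
  simp only [div_neg, ← neg_div, neg_sub, ← sub_eq_add_neg, sub_neg_eq_add]
  exact specA_comm _ _

namespace HasSpecData

variable {f : ℝ → ℝ} {x L α β : ℝ}

lemma tendsto_right_difference_quotient (hf : HasSpecData f x L α β) :
    Tendsto (fun h => (f (x + h) - L) / h) (𝓝[>] 0) (𝓝 α) := by
  obtain ⟨-, -, hright, -⟩ := hf
  simpa only [Function.comp_def, add_sub_cancel_left] using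
    hright.comp (tendsto_const_add_nhdsGT_zero x)

lemma tendsto_left_difference_quotient (hf : HasSpecData f x L α β) :
    Tendsto (fun h => (L - f (x - h)) / h) (𝓝[>] 0) (𝓝 β) := by
  obtain ⟨-, -, -, hleft⟩ := hf
  simpa only [Function.comp_def, sub_sub_cancel_left, div_neg, ← neg_div, neg_sub] using
    hleft.comp (tendsto_const_sub_nhdsGT_zero x)

lemma tendsto_specA_difference_quotients (hf : HasSpecData f x L α β) :
    Tendsto (fun h => specA ((f (x + h) - L) / h) ((L - f (x - h)) / h)) (𝓝[≠] 0)
      (𝓝 (specA α β)) := by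
  rw [tendsto_nhdsNE_zero_iff_of_even (even_specA_difference_quotients f x L)]
  exact (continuous_specA.tendsto (α, β)).comp
    (hf.tendsto_right_difference_quotient.prodMk_nhds hf.tendsto_left_difference_quotient)

end HasSpecData

theorem specular_derivatives_criterion (f : ℝ → ℝ) (x L α β : ℝ)
    (hf : HasSpecData f x L α β) :
    Tendsto (fun h : ℝ =>
      ((f (x + h) - L) * Real.sqrt ((f (x - h) - L) ^ 2 + h ^ 2)
          - (f (x - h) - L) * Real.sqrt ((f (x + h) - L) ^ 2 + h ^ 2)) /
        (h * Real.sqrt ((f (x - h) - L) ^ 2 + h ^ 2)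
          + h * Real.sqrt ((f (x + h) - L) ^ 2 + h ^ 2)))
      (𝓝[≠] (0 : ℝ)) (𝓝 (specA α β)) := by
  refine hf.tendsto_specA_difference_quotients.congr' ?_
  filter_upwards [self_mem_nhdsWithin] with h hh
  rw [specA_div_div _ _ hh, sub_sq_comm L, ← neg_sub (f (x - h)) L, neg_mul, ← sub_eq_add_neg]
end

section
/- Let f : ℝ → ℝ and x₀ ∈ ℝ, and suppose both one-sided specular derivatives of f at x₀ exist (so the phototangent pht f of f at x₀ is defined). Then f is differentiable at x₀ if and only if f is continuous at x₀ and pht f is differentiable at x₀. -/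
/-!
A one-sided specular derivative is the ordinary one-sided derivative of `f` after its value at `x₀`
has been replaced by the one-sided limit `a`, that is, of `Function.update f x₀ a`. Consequently `f`
itself has a one-sided derivative exactly when `f x₀ = a`, and `f` is differentiable at `x₀` exactly
when `f x₀ = l`, `f x₀ = r` and the two specular derivatives agree. The phototangent has the same
one-sided limits and specular derivatives as `f`, but the value `(l + r) / 2` at `x₀`, so its
differentiability amounts to `l = r` and equality of the specular derivatives; what is missing for
`f` is exactly continuity.
-/

open Filter Topology Set

section OneSidedLimit

variable {α β : Type*} [TopologicalSpace α] [TopologicalSpace β] [T2Space β]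

theorem continuousWithinAt_iff_eq_of_tendsto {f : α → β} {s : Set α} {x : α} {a : β}
    [(𝓝[s] x).NeBot] (h : Tendsto f (𝓝[s] x) (𝓝 a)) : ContinuousWithinAt f s x ↔ f x = a :=
  ⟨fun hf => tendsto_nhds_unique hf h, fun hxa => by rwa [ContinuousWithinAt, hxa]⟩

theorem continuousAt_iff_eq_and_eq_of_tendsto [LinearOrder α] {f : α → β} {x : α} {l r : β}
    [(𝓝[<] x).NeBot] [(𝓝[>] x).NeBot]
    (hl : Tendsto f (𝓝[<] x) (𝓝 l)) (hr : Tendsto f (𝓝[>] x) (𝓝 r)) :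
    ContinuousAt f x ↔ f x = l ∧ f x = r := by
  rw [continuousAt_iff_continuous_left'_right', continuousWithinAt_iff_eq_of_tendsto hl,
    continuousWithinAt_iff_eq_of_tendsto hr]

end OneSidedLimit

section OneSidedDerivative

variable {𝕜 F : Type*} [NontriviallyNormedField 𝕜] [NormedAddCommGroup F] [NormedSpace 𝕜 F]

theorem hasDerivWithinAt_update_iff_tendsto_div [DecidableEq 𝕜] {f : 𝕜 → 𝕜} {s : Set 𝕜}
    {x a d : 𝕜} (hx : x ∉ s) :
    HasDerivWithinAt (Function.update f x a) d s x ↔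
      Tendsto (fun y => (f y - a) / (y - x)) (𝓝[s] x) (𝓝 d) := by
  rw [hasDerivWithinAt_iff_tendsto_slope' hx]
  refine tendsto_congr' (eventually_mem_nhdsWithin.mono fun y hy => ?_)
  rw [slope_def_field, Function.update_self, Function.update_of_ne (ne_of_mem_of_not_mem hy hx)]

theorem hasDerivWithinAt_iff_of_hasDerivWithinAt_update [DecidableEq 𝕜] {f : 𝕜 → F}
    {s : Set 𝕜} {x : 𝕜} {a d f' : F} (hs : UniqueDiffWithinAt 𝕜 s x)
    (h : HasDerivWithinAt (Function.update f x a) d s x) :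
    HasDerivWithinAt f f' s x ↔ f x = a ∧ f' = d := by
  constructor
  · intro hf
    have : (𝓝[s \ {x}] x).NeBot := accPt_principal_iff_nhdsWithin.1 hs.accPt
    have tendsto_a : Tendsto f (𝓝[s \ {x}] x) (𝓝 a) :=
      continuousWithinAt_update_same.1 h.continuousWithinAt
    obtain rfl : f x = a := (continuousWithinAt_iff_eq_of_tendsto tendsto_a).1
      (hf.continuousWithinAt.mono sdiff_subset)
    rw [Function.update_eq_self] at h
    exact ⟨rfl, hs.eq_deriv s hf h⟩
  · rintro ⟨rfl, rfl⟩
    rwa [Function.update_eq_self] at h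

theorem hasDerivAt_iff_hasDerivWithinAt_Iio_Ioi [LinearOrder 𝕜] {f : 𝕜 → F} {f' : F} {x : 𝕜} :
    HasDerivAt f f' x ↔ HasDerivWithinAt f f' (Iio x) x ∧ HasDerivWithinAt f f' (Ioi x) x := by
  rw [hasDerivAt_iff_tendsto_slope_left_right, hasDerivWithinAt_iff_tendsto_slope' self_notMem_Iio,
    hasDerivWithinAt_iff_tendsto_slope' self_notMem_Ioi]

theorem hasDerivAt_const_mul_sub_add_const (x d a : 𝕜) :
    HasDerivAt (fun y => d * (y - x) + a) d x := by
  simpa using (((hasDerivAt_id x).sub_const x).const_mul d).add_const a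

end OneSidedDerivative

theorem differentiableAt_iff_of_hasDerivWithinAt_update {F : Type*} [NormedAddCommGroup F]
    [NormedSpace ℝ F] {f : ℝ → F} {x : ℝ} {l r dm dp : F}
    (hl : HasDerivWithinAt (Function.update f x l) dm (Iio x) x)
    (hr : HasDerivWithinAt (Function.update f x r) dp (Ioi x) x) :
    DifferentiableAt ℝ f x ↔ (f x = l ∧ f x = r) ∧ dm = dp := by
  have hasDerivAt_iff (f' : F) : HasDerivAt f f' x ↔ (f x = l ∧ f' = dm) ∧ f x = r ∧ f' = dp := by
    rw [hasDerivAt_iff_hasDerivWithinAt_Iio_Ioi,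
      hasDerivWithinAt_iff_of_hasDerivWithinAt_update (uniqueDiffWithinAt_Iio x) hl,
      hasDerivWithinAt_iff_of_hasDerivWithinAt_update (uniqueDiffWithinAt_Ioi x) hr]
  constructor
  · intro hf
    obtain ⟨⟨hfl, hdm⟩, hfr, hdp⟩ := (hasDerivAt_iff _).1 hf.hasDerivAt
    exact ⟨⟨hfl, hfr⟩, hdm.symm.trans hdp⟩
  · rintro ⟨⟨hfl, hfr⟩, hd⟩
    exact ((hasDerivAt_iff dm).2 ⟨⟨hfl, rfl⟩, hfr, hd⟩).differentiableAt

section Phototangent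

variable (x₀ l r dm dp : ℝ)

theorem phtFun_self : phtFun x₀ l r dm dp x₀ = (l + r) / 2 := by
  simp [phtFun]

theorem hasDerivWithinAt_update_phtFun_Iio :
    HasDerivWithinAt (Function.update (phtFun x₀ l r dm dp) x₀ l) dm (Iio x₀) x₀ := by
  refine (hasDerivAt_const_mul_sub_add_const x₀ dm l).hasDerivWithinAt.congr (fun y hy => ?_)
    (by simp)
  rw [Function.update_of_ne (ne_of_lt hy), phtFun, if_pos (mem_Iio.1 hy)]

theorem hasDerivWithinAt_update_phtFun_Ioi :
    HasDerivWithinAt (Function.update (phtFun x₀ l r dm dp) x₀ r) dp (Ioi x₀) x₀ := by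
  refine (hasDerivAt_const_mul_sub_add_const x₀ dp r).hasDerivWithinAt.congr (fun y hy => ?_)
    (by simp)
  rw [Function.update_of_ne (ne_of_gt hy), phtFun, if_neg (not_lt_of_gt hy), if_neg (ne_of_gt hy)]

theorem differentiableAt_phtFun_iff :
    DifferentiableAt ℝ (phtFun x₀ l r dm dp) x₀ ↔ l = r ∧ dm = dp := by
  have midpoint_eq_iff : ((l + r) / 2 = l ∧ (l + r) / 2 = r) ↔ l = r := by grind
  rw [differentiableAt_iff_of_hasDerivWithinAt_update
    (hasDerivWithinAt_update_phtFun_Iio x₀ l r dm dp)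
    (hasDerivWithinAt_update_phtFun_Ioi x₀ l r dm dp), phtFun_self, midpoint_eq_iff]

end Phototangent

theorem differentiable_iff_continuous_and_pht_differentiable
    (f : ℝ → ℝ) (x₀ l r dm dp : ℝ)
    (hl : Tendsto f (𝓝[<] x₀) (𝓝 l)) (hr : Tendsto f (𝓝[>] x₀) (𝓝 r))
    (hdp : Tendsto (fun x => (f x - r) / (x - x₀)) (𝓝[>] x₀) (𝓝 dp))
    (hdm : Tendsto (fun x => (f x - l) / (x - x₀)) (𝓝[<] x₀) (𝓝 dm)) :
    DifferentiableAt ℝ f x₀ ↔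
      ContinuousAt f x₀ ∧ DifferentiableAt ℝ (phtFun x₀ l r dm dp) x₀ := by
  rw [differentiableAt_iff_of_hasDerivWithinAt_update
      ((hasDerivWithinAt_update_iff_tendsto_div self_notMem_Iio).2 hdm)
      ((hasDerivWithinAt_update_iff_tendsto_div self_notMem_Ioi).2 hdp),
    continuousAt_iff_eq_and_eq_of_tendsto hl hr, differentiableAt_phtFun_iff]
  refine and_congr_right fun ⟨hfl, hfr⟩ => ?_
  exact (and_iff_right (hfl.symm.trans hfr)).symm
end

section
/- Let α, β ∈ ℝ with α + β ≠ 0, and set A(α, β) := (αβ − 1 + √((α² + 1)(β² + 1)))/(α + β). Then: (i) A(α, β) ≠ 0; (ii) A(α, β) has the same sign as α + β, i.e., sgn(A(α, β)) = sgn(α + β); (iii) −|α + β|/2 ≤ A(α, β) ≤ |α + β|/2. -/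
open Filter Topology Set

/-!
Put `D = 1 - α β + √((α² + 1)(β² + 1))`. Rationalising the numerator, with
`(α² + 1)(β² + 1) = (1 - α β)² + (α + β)²`, gives `A(α, β) = (α + β) / D`, while the companion
identity `(α² + 1)(β² + 1) = (1 + α β)² + (α - β)²` gives `D ≥ 2`.
-/

theorem real_sign_div_of_pos {x d : ℝ} (hd : 0 < d) : Real.sign (x / d) = Real.sign x := by
  rcases lt_trichotomy x 0 with hx | rfl | hx
  · rw [Real.sign_of_neg hx, Real.sign_of_neg (div_neg_of_neg_of_pos hx hd)]
  · rw [zero_div]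
  · rw [Real.sign_of_pos hx, Real.sign_of_pos (div_pos hx hd)]

theorem one_add_mul_le_sqrt (α β : ℝ) : 1 + α * β ≤ √((α ^ 2 + 1) * (β ^ 2 + 1)) := by
  refine Real.le_sqrt_of_sq_le ?_
  calc
    (1 + α * β) ^ 2 ≤ (1 + α * β) ^ 2 + (α - β) ^ 2 := le_add_of_nonneg_right (sq_nonneg _)
    _ = (α ^ 2 + 1) * (β ^ 2 + 1) := by ring

theorem two_le_one_sub_mul_add_sqrt (α β : ℝ) :
    2 ≤ 1 - α * β + √((α ^ 2 + 1) * (β ^ 2 + 1)) := by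
  linarith [one_add_mul_le_sqrt α β]

theorem specA_eq_add_div (α β : ℝ) :
    specA α β = (α + β) / (1 - α * β + √((α ^ 2 + 1) * (β ^ 2 + 1))) := by
  rcases eq_or_ne (α + β) 0 with hsum | hsum
  · rw [specA, if_pos hsum, hsum, zero_div]
  · have hden : 1 - α * β + √((α ^ 2 + 1) * (β ^ 2 + 1)) ≠ 0 := by
      linarith [two_le_one_sub_mul_add_sqrt α β]
    have hsq : √((α ^ 2 + 1) * (β ^ 2 + 1)) ^ 2 = (1 - α * β) ^ 2 + (α + β) ^ 2 := by
      rw [Real.sq_sqrt (by positivity)]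
      ring
    rw [specA, if_neg hsum, div_eq_div_iff hsum hden]
    linear_combination hsq

theorem sign_specA (α β : ℝ) : Real.sign (specA α β) = Real.sign (α + β) := by
  rw [specA_eq_add_div]
  exact real_sign_div_of_pos (two_pos.trans_le (two_le_one_sub_mul_add_sqrt α β))

theorem specA_eq_zero_iff (α β : ℝ) : specA α β = 0 ↔ α + β = 0 := by
  rw [← Real.sign_eq_zero_iff, sign_specA, Real.sign_eq_zero_iff]

theorem abs_specA_le (α β : ℝ) : |specA α β| ≤ |α + β| / 2 := by
  have hden := two_le_one_sub_mul_add_sqrt α β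
  rw [specA_eq_add_div, abs_div, abs_of_pos (two_pos.trans_le hden)]
  gcongr

theorem specA_properties (α β : ℝ) (h : α + β ≠ 0) :
    specA α β ≠ 0 ∧ Real.sign (specA α β) = Real.sign (α + β) ∧
      -|α + β| / 2 ≤ specA α β ∧ specA α β ≤ |α + β| / 2 := by
  have habs : -(|α + β| / 2) ≤ specA α β ∧ specA α β ≤ |α + β| / 2 :=
    abs_le.mp (abs_specA_le α β)
  rw [← neg_div] at habs
  exact ⟨(specA_eq_zero_iff α β).not.mpr h, sign_specA α β, habs⟩
end

section
/- Let f : ℝ → ℝ be continuous on a closed interval [a, b] (a < b) and specularly differentiable at every point of (a, b). (i) If f(a) < f(b), then there exists c₁ ∈ (a, b) such that f^S(c₁) ≥ 0. (ii) If f(a) > f(b), then there exists c₂ ∈ (a, b) such that f^S(c₂) ≤ 0. -/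
open Filter Topology Set

/-!
For a level `k` with `f a < k < f b`, let `c` be the infimum of the points of `[a, b]` where `f`
exceeds `k`. Then `f c = k`, while `f ≤ k` to the left of `c` and `f > k` at points arbitrarily
close to the right of `c`, so both one-sided specular derivatives at `c` are nonnegative, and
`A(α, β)` has the sign of `α + β`. Distinct levels give distinct points `c`, so a countable set of
points where `f` is not specularly differentiable is avoided by choosing `k` outside its image.
-/

section Upcrossing

variable {X Y : Type*} [ConditionallyCompleteLinearOrder X] [TopologicalSpace X] [OrderTopology X]
  [DenselyOrdered X] [LinearOrder Y] [TopologicalSpace Y] [OrderClosedTopology Y]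
  {f : X → Y} {a b : X} {k : Y}

theorem exists_first_upcrossing (hab : a ≤ b) (hf : ContinuousOn f (Icc a b))
    (ha : f a < k) (hb : k < f b) :
    ∃ c ∈ Ioo a b, f c = k ∧ (∀ x ∈ Ico a c, f x ≤ k) ∧ ∃ᶠ x in 𝓝[>] c, k < f x := by
  let S : Set X := {x ∈ Icc a b | k < f x}
  have hbS : b ∈ S := ⟨right_mem_Icc.2 hab, hb⟩
  obtain ⟨c, hc⟩ : ∃ c, IsGLB S c := ⟨sInf S, isGLB_csInf ⟨b, hbS⟩ ⟨a, fun _ hx => hx.1.1⟩⟩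
  have hcI : c ∈ Icc a b := ⟨hc.2 fun _ hx => hx.1.1, hc.1 hbS⟩
  have hbefore : ∀ x ∈ Ico a c, f x ≤ k := fun x hx =>
    not_lt.1 fun hkx => hx.2.not_ge (hc.1 ⟨⟨hx.1, hx.2.le.trans hcI.2⟩, hkx⟩)
  have hge : k ≤ f c :=
    continuousWithinAt_const.closure_le (hc.mem_closure ⟨b, hbS⟩)
      ((hf c hcI).mono fun _ hx => hx.1) fun _ hx => hx.2.le
  have hac : a < c := hcI.1.lt_of_ne fun h => ha.not_ge (h ▸ hge)
  have hle : f c ≤ k :=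
    ((hf c hcI).mono fun x hx => ⟨hx.1, hx.2.le.trans hcI.2⟩).closure_le
      (closure_Ico hac.ne ▸ right_mem_Icc.2 hac.le) continuousWithinAt_const hbefore
  have hcb : c < b := hcI.2.lt_of_ne fun h => hb.not_ge (h ▸ hle)
  have hcS : c ∉ S := fun h => h.2.not_ge hle
  refine ⟨c, ⟨hac, hcb⟩, hle.antisymm hge, hbefore, frequently_nhdsWithin_iff.2 ?_⟩
  refine (hc.frequently_nhds_mem ⟨b, hbS⟩).mono fun x hx => ⟨hx.2, ?_⟩
  exact (hc.1 hx).lt_of_ne fun h => hcS (h ▸ hx)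

end Upcrossing

theorem specA_nonneg {α β : ℝ} (h : 0 ≤ α + β) : 0 ≤ specA α β := by
  unfold specA
  split_ifs
  · exact le_rfl
  · have hsq : (1 - α * β) ^ 2 ≤ (α ^ 2 + 1) * (β ^ 2 + 1) := by linarith [sq_nonneg (α + β)]
    have hsqrt := Real.le_sqrt_of_sq_le hsq
    exact div_nonneg (by linarith) h

theorem specA_neg (α β : ℝ) : specA (-α) (-β) = -specA α β := by
  have hadd : -α + -β = -(α + β) := by ring
  simp only [specA, hadd, neg_eq_zero, neg_mul_neg, neg_sq, div_neg]
  split_ifs <;> simp only [neg_zero]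

namespace HasSpecData

variable {f : ℝ → ℝ} {x₀ L α β : ℝ}

theorem neg (h : HasSpecData f x₀ L α β) : HasSpecData (-f) x₀ (-L) (-α) (-β) := by
  obtain ⟨hlim_left, hlim_right, hslope_right, hslope_left⟩ := h
  refine ⟨hlim_left.neg, hlim_right.neg, hslope_right.neg.congr fun x => ?_,
    hslope_left.neg.congr fun x => ?_⟩ <;>
  · rw [Pi.neg_apply]
    ring

theorem eq_of_continuousAt (h : HasSpecData f x₀ L α β) (hf : ContinuousAt f x₀) : L = f x₀ :=
  tendsto_nhds_unique h.1 hf.continuousWithinAt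

theorem right_nonneg (h : HasSpecData f x₀ L α β) (hf : ∃ᶠ x in 𝓝[>] x₀, L ≤ f x) : 0 ≤ α :=
  ge_of_tendsto_of_frequently h.2.2.1 <|
    (hf.and_eventually self_mem_nhdsWithin).mono fun _ ⟨hLx, hx⟩ =>
      div_nonneg (sub_nonneg.2 hLx) (sub_nonneg.2 (mem_Ioi.1 hx).le)

theorem left_nonneg (h : HasSpecData f x₀ L α β) (hf : ∃ᶠ x in 𝓝[<] x₀, f x ≤ L) : 0 ≤ β :=
  ge_of_tendsto_of_frequently h.2.2.2 <|
    (hf.and_eventually self_mem_nhdsWithin).mono fun _ ⟨hxL, hx⟩ =>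
      div_nonneg_of_nonpos (sub_nonpos.2 hxL) (sub_nonpos.2 (mem_Iio.1 hx).le)

end HasSpecData

theorem SpecDifferentiableAt.neg {f : ℝ → ℝ} {x₀ : ℝ} (h : SpecDifferentiableAt f x₀) :
    SpecDifferentiableAt (-f) x₀ :=
  let ⟨_, _, _, hd⟩ := h
  ⟨_, _, _, hd.neg⟩

theorem HasSpecDerivAt.neg {f : ℝ → ℝ} {x₀ d : ℝ} (h : HasSpecDerivAt f x₀ d) :
    HasSpecDerivAt (-f) x₀ (-d) := by
  obtain ⟨L, α, β, hd, rfl⟩ := h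
  exact ⟨_, _, _, hd.neg, (specA_neg α β).symm⟩

section Existence

variable {f : ℝ → ℝ} {a b : ℝ} {s : Set ℝ}

theorem exists_hasSpecDerivAt_nonneg (hab : a ≤ b) (hs : s.Countable)
    (hcont : ContinuousOn f (Icc a b)) (hspec : ∀ x ∈ Ioo a b \ s, SpecDifferentiableAt f x)
    (hfab : f a < f b) : ∃ c ∈ Ioo a b \ s, ∃ d, HasSpecDerivAt f c d ∧ 0 ≤ d := by
  obtain ⟨k, hks, hak, hkb⟩ := ((hs.image f).dense_compl ℝ).exists_between hfab
  obtain ⟨c, hc, rfl, hbefore, hafter⟩ := exists_first_upcrossing hab hcont hak hkb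
  have hcs : c ∉ s := fun h => hks (mem_image_of_mem f h)
  obtain ⟨L, α, β, hd⟩ := hspec c ⟨hc, hcs⟩
  obtain rfl : L = f c := hd.eq_of_continuousAt (hcont.continuousAt (Icc_mem_nhds hc.1 hc.2))
  have hα : 0 ≤ α := hd.right_nonneg (hafter.mono fun _ => le_of_lt)
  have hleft : ∀ᶠ x in 𝓝[<] c, f x ≤ f c := mem_of_superset (Ico_mem_nhdsLT hc.1) hbefore
  have hβ : 0 ≤ β := hd.left_nonneg hleft.frequently
  exact ⟨c, ⟨hc, hcs⟩, specA α β, ⟨f c, α, β, hd, rfl⟩, specA_nonneg (add_nonneg hα hβ)⟩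

theorem exists_hasSpecDerivAt_nonpos (hab : a ≤ b) (hs : s.Countable)
    (hcont : ContinuousOn f (Icc a b)) (hspec : ∀ x ∈ Ioo a b \ s, SpecDifferentiableAt f x)
    (hfba : f b < f a) : ∃ c ∈ Ioo a b \ s, ∃ d, HasSpecDerivAt f c d ∧ d ≤ 0 := by
  obtain ⟨c, hc, d, hd, hd_nonneg⟩ :=
    exists_hasSpecDerivAt_nonneg hab hs hcont.neg (fun x hx => (hspec x hx).neg) (neg_lt_neg hfba)
  exact ⟨c, hc, -d, neg_neg f ▸ hd.neg, neg_nonpos.2 hd_nonneg⟩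

theorem continuous_and_existence_general (hab : a ≤ b) (hs : s.Countable)
    (hcont : ContinuousOn f (Icc a b)) (hspec : ∀ x ∈ Ioo a b \ s, SpecDifferentiableAt f x) :
    (f a < f b → ∃ c₁ ∈ Ioo a b \ s, ∃ d₁, HasSpecDerivAt f c₁ d₁ ∧ 0 ≤ d₁) ∧
      (f b < f a → ∃ c₂ ∈ Ioo a b \ s, ∃ d₂, HasSpecDerivAt f c₂ d₂ ∧ d₂ ≤ 0) :=
  ⟨exists_hasSpecDerivAt_nonneg hab hs hcont hspec, exists_hasSpecDerivAt_nonpos hab hs hcont hspec⟩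

end Existence

theorem continuous_and_existence (f : ℝ → ℝ) (a b : ℝ) (hab : a < b)
    (hcont : ContinuousOn f (Set.Icc a b))
    (hspec : ∀ x ∈ Set.Ioo a b, SpecDifferentiableAt f x) :
    (f a < f b → ∃ c₁ ∈ Set.Ioo a b, ∃ d₁, HasSpecDerivAt f c₁ d₁ ∧ 0 ≤ d₁) ∧
      (f b < f a → ∃ c₂ ∈ Set.Ioo a b, ∃ d₂, HasSpecDerivAt f c₂ d₂ ∧ d₂ ≤ 0) := by
  simpa only [sdiff_empty] using
    continuous_and_existence_general hab.le countable_empty hcont fun x hx => hspec x hx.1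
end

section
/- Let θ₁, θ₂, θ ∈ (−π/2, π/2) be such that tan θ = A(tan θ₁, tan θ₂). Then θ = (θ₁ + θ₂)/2. -/
open Filter Topology Set

/-! With `s = θ₁ + θ₂`, multiplying numerator and denominator of `A(tan θ₁, tan θ₂)` by
`cos θ₁ * cos θ₂ > 0` turns the quotient into `(1 - cos s) / sin s`, which is `tan (s / 2)`. -/

section

open Real

theorem specA_eq_div (α β : ℝ) :
    specA α β = (α * β - 1 + √((α ^ 2 + 1) * (β ^ 2 + 1))) / (α + β) := by
  unfold specA
  split_ifs with h
  · rw [h, div_zero]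
  · rfl

variable {x y : ℝ}

theorem tan_add_tan (hx : cos x ≠ 0) (hy : cos y ≠ 0) :
    tan x + tan y = sin (x + y) / (cos x * cos y) := by
  rw [tan_eq_sin_div_cos, tan_eq_sin_div_cos, div_add_div _ _ hx hy, sin_add]

theorem tan_mul_tan_sub_one (hx : cos x ≠ 0) (hy : cos y ≠ 0) :
    tan x * tan y - 1 = -cos (x + y) / (cos x * cos y) := by
  rw [tan_eq_sin_div_cos, tan_eq_sin_div_cos, div_mul_div_comm,
    div_sub_one (mul_ne_zero hx hy), cos_add, neg_sub]

theorem sqrt_tan_sq_add_one (hx : cos x ≠ 0) : √(tan x ^ 2 + 1) = |cos x|⁻¹ := by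
  rw [← sqrt_sq_eq_abs, ← sqrt_inv, ← inv_one_add_tan_sq hx, inv_inv, add_comm]

-- At odd multiples of `π` both sides are `0` because of division by zero.
theorem tan_half (x : ℝ) : tan (x / 2) = (1 - cos x) / sin x := by
  have hcos : 1 - cos x = 2 * sin (x / 2) ^ 2 := by
    rw [sin_sq_eq_half_sub, mul_div_cancel₀ x two_ne_zero]
    ring
  have hsin : sin x = 2 * sin (x / 2) * cos (x / 2) := by
    rw [← sin_two_mul, mul_div_cancel₀ x two_ne_zero]
  rw [hcos, hsin, tan_eq_sin_div_cos]
  field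

theorem specA_tan_tan (h : 0 < cos x * cos y) :
    specA (tan x) (tan y) = tan ((x + y) / 2) := by
  have hx : cos x ≠ 0 := left_ne_zero_of_mul h.ne'
  have hy : cos y ≠ 0 := right_ne_zero_of_mul h.ne'
  have hsqrt : √((tan x ^ 2 + 1) * (tan y ^ 2 + 1)) = 1 / (cos x * cos y) := by
    rw [sqrt_mul (by positivity), sqrt_tan_sq_add_one hx, sqrt_tan_sq_add_one hy,
      ← mul_inv, ← abs_mul, abs_of_pos h, one_div]
  calc
    specA (tan x) (tan y)
      = (-cos (x + y) / (cos x * cos y) + 1 / (cos x * cos y)) /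
          (sin (x + y) / (cos x * cos y)) := by
        rw [specA_eq_div, tan_mul_tan_sub_one hx hy, hsqrt, tan_add_tan hx hy]
    _ = (1 - cos (x + y)) / sin (x + y) := by
        rw [← add_div, div_div_div_cancel_right₀ h.ne', neg_add_eq_sub]
    _ = tan ((x + y) / 2) := (tan_half (x + y)).symm

end

theorem average_of_angle (θ θ₁ θ₂ : ℝ)
    (hθ : θ ∈ Set.Ioo (-(Real.pi / 2)) (Real.pi / 2))
    (hθ₁ : θ₁ ∈ Set.Ioo (-(Real.pi / 2)) (Real.pi / 2))
    (hθ₂ : θ₂ ∈ Set.Ioo (-(Real.pi / 2)) (Real.pi / 2))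
    (h : Real.tan θ = specA (Real.tan θ₁) (Real.tan θ₂)) :
    θ = (θ₁ + θ₂) / 2 := by
  have hcos : 0 < Real.cos θ₁ * Real.cos θ₂ :=
    mul_pos (Real.cos_pos_of_mem_Ioo hθ₁) (Real.cos_pos_of_mem_Ioo hθ₂)
  have hmid : (θ₁ + θ₂) / 2 ∈ Set.Ioo (-(Real.pi / 2)) (Real.pi / 2) :=
    ⟨by linarith [hθ₁.1, hθ₂.1], by linarith [hθ₁.2, hθ₂.2]⟩
  exact Real.injOn_tan hθ hmid (h.trans (specA_tan_tan hcos))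
end

section
/- Let I ⊆ ℝ be an open interval and f : ℝ → ℝ be continuous on I. Suppose f is specularly differentiable at every point of I and the second order specular derivative f^SS(x) = (f^S)^S(x) exists for all x ∈ I. Then for every x ∈ I, f is differentiable at x and f'(x) = f^S(x). -/
/-!
Since `specA α β = tan ((arctan α + arctan β) / 2)`, a specular derivative lies between the two
one-sided derivatives, so an upper bound `M` on it bounds at least one of them at each point.
This already forces slopes to be at most `M`: for `K > M`, if `h t = f t - K t` were larger at the
right end of an interval than at the left end, then each intermediate level would be crossed for
the last time at some `p`, where the right derivative of `h` cannot be negative; so the left one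
is, and `p` is a local minimum. But a function on a second countable space has only countably many
local minimum values. With the symmetric lower bound this is a mean value inequality: near `x` the
slopes of `f` lie between bounds for `g = f^S`, so if `g` has a limit `L` at `x`, then `f' x = L`,
and a specular derivative agrees with the derivative where the latter exists.
-/

open Filter Topology Set

theorem specA_eq_tan (α β : ℝ) : specA α β = Real.tan ((Real.arctan α + Real.arctan β) / 2) := by
  by_cases h : α + β = 0
  · simp [specA, eq_neg_of_add_eq_zero_right h, Real.arctan_neg]
  set φ := (Real.arctan α + Real.arctan β) / 2
  -- Expanding the quotient defining `specA` by `c` turns it into `(1 - cos 2φ) / sin 2φ`.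
  set c := Real.cos (Real.arctan α) * Real.cos (Real.arctan β) with hc_def
  have hc : 0 < c := mul_pos (Real.cos_arctan_pos α) (Real.cos_arctan_pos β)
  have hadd : Real.arctan α + Real.arctan β = 2 * φ := by ring
  have hsin_arctan (γ : ℝ) : Real.sin (Real.arctan γ) = γ * Real.cos (Real.arctan γ) := by
    rw [← Real.tan_mul_cos (Real.cos_arctan_pos γ).ne', Real.tan_arctan]
  have hsin : (α + β) * c = 2 * Real.sin φ * Real.cos φ := by
    rw [← Real.sin_two_mul, ← hadd, Real.sin_add, hsin_arctan, hsin_arctan]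
    ring
  have hcos : (α * β - 1) * c = 2 * Real.sin φ ^ 2 - 1 := by
    have hcos_add := Real.cos_add (Real.arctan α) (Real.arctan β)
    rw [hadd, Real.cos_two_mul, hsin_arctan, hsin_arctan] at hcos_add
    linear_combination hcos_add - 2 * Real.sin_sq_add_cos_sq φ
  have hsqrt : √((α ^ 2 + 1) * (β ^ 2 + 1)) * c = 1 := by
    rw [hc_def, Real.cos_arctan, Real.cos_arctan, Real.sqrt_mul (by positivity),
      add_comm 1, add_comm 1]
    field_simp
  have hne : 2 * Real.sin φ * Real.cos φ ≠ 0 := hsin ▸ mul_ne_zero h hc.ne'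
  have hcosφ : Real.cos φ ≠ 0 := right_ne_zero_of_mul hne
  rw [specA, if_neg h, Real.tan_eq_sin_div_cos, div_eq_div_iff h hcosφ]
  apply mul_right_cancel₀ hc.ne'
  linear_combination Real.cos φ * (hcos + hsqrt) - Real.sin φ * hsin

theorem specA_self (α : ℝ) : specA α α = α := by
  rw [specA_eq_tan, add_self_div_two, Real.tan_arctan]

theorem arctan_specA (α β : ℝ) :
    Real.arctan (specA α β) = (Real.arctan α + Real.arctan β) / 2 := by
  rw [specA_eq_tan]
  exact Real.arctan_tan
    (by linarith [Real.neg_pi_div_two_lt_arctan α, Real.neg_pi_div_two_lt_arctan β])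
    (by linarith [Real.arctan_lt_pi_div_two α, Real.arctan_lt_pi_div_two β])

theorem min_le_specA (α β : ℝ) : min α β ≤ specA α β := by
  rw [← Real.arctan_le_arctan_iff, arctan_specA, Real.arctan_strictMono.monotone.map_min]
  linarith [min_le_left (Real.arctan α) (Real.arctan β),
    min_le_right (Real.arctan α) (Real.arctan β)]

theorem specA_le_max (α β : ℝ) : specA α β ≤ max α β := by
  rw [← Real.arctan_le_arctan_iff, arctan_specA, Real.arctan_strictMono.monotone.map_max]
  linarith [le_max_left (Real.arctan α) (Real.arctan β),
    le_max_right (Real.arctan α) (Real.arctan β)]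

theorem HasSpecDerivAt.exists_hasDerivWithinAt {f : ℝ → ℝ} {x d : ℝ} (h : HasSpecDerivAt f x d)
    (hf : ContinuousAt f x) :
    ∃ α β, HasDerivWithinAt f α (Ioi x) x ∧ HasDerivWithinAt f β (Iio x) x ∧ d = specA α β := by
  obtain ⟨L, α, β, ⟨hL, -, hα, hβ⟩, rfl⟩ := h
  obtain rfl : L = f x := tendsto_nhds_unique hL hf.continuousWithinAt
  refine ⟨α, β, ?_, ?_, rfl⟩ <;>
    simpa only [hasDerivWithinAt_iff_tendsto_slope' self_notMem_Ioi,
      hasDerivWithinAt_iff_tendsto_slope' self_notMem_Iio, slope_fun_def_field]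

theorem HasSpecDerivAt.eq_of_hasDerivAt {f : ℝ → ℝ} {x d f' : ℝ} (h : HasSpecDerivAt f x d)
    (hf : HasDerivAt f f' x) : d = f' := by
  obtain ⟨α, β, hα, hβ, rfl⟩ := h.exists_hasDerivWithinAt hf.continuousAt
  rw [(uniqueDiffWithinAt_Ioi x).eq_deriv _ hα hf.hasDerivWithinAt,
    (uniqueDiffWithinAt_Iio x).eq_deriv _ hβ hf.hasDerivWithinAt, specA_self]

theorem HasSpecDerivAt.exists_le_hasDerivWithinAt {f : ℝ → ℝ} {x d : ℝ} (h : HasSpecDerivAt f x d)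
    (hf : ContinuousAt f x) :
    ∃ c ≤ d, HasDerivWithinAt f c (Ioi x) x ∨ HasDerivWithinAt f c (Iio x) x := by
  obtain ⟨α, β, hα, hβ, rfl⟩ := h.exists_hasDerivWithinAt hf
  rcases min_le_iff.1 (min_le_specA α β) with hle | hle
  exacts [⟨α, hle, .inl hα⟩, ⟨β, hle, .inr hβ⟩]

theorem HasSpecDerivAt.exists_ge_hasDerivWithinAt {f : ℝ → ℝ} {x d : ℝ} (h : HasSpecDerivAt f x d)
    (hf : ContinuousAt f x) :
    ∃ c ≥ d, HasDerivWithinAt f c (Ioi x) x ∨ HasDerivWithinAt f c (Iio x) x := by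
  obtain ⟨α, β, hα, hβ, rfl⟩ := h.exists_hasDerivWithinAt hf
  rcases le_max_iff.1 (specA_le_max α β) with hle | hle
  exacts [⟨α, hle, .inl hα⟩, ⟨β, hle, .inr hβ⟩]

theorem SpecDifferentiableAt.exists_tendsto_nhdsNE {f : ℝ → ℝ} {x : ℝ}
    (h : SpecDifferentiableAt f x) : ∃ L, Tendsto f (𝓝[≠] x) (𝓝 L) := by
  obtain ⟨L, α, β, hl, hr, -, -⟩ := h
  exact ⟨L, nhdsLT_sup_nhdsGT x ▸ hl.sup hr⟩

theorem countable_image_setOf_isLocalMin {X Y : Type*} [TopologicalSpace X]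
    [SecondCountableTopology X] [PartialOrder Y] (h : X → Y) :
    (h '' {p | IsLocalMin h p}).Countable := by
  let minValues (U : Set X) : Set Y := h '' {p ∈ U | ∀ t ∈ U, h p ≤ h t}
  have hsub (U : Set X) : (minValues U).Subsingleton := by
    rintro _ ⟨p, ⟨hpU, hp⟩, rfl⟩ _ ⟨q, ⟨hqU, hq⟩, rfl⟩
    exact le_antisymm (hp q hqU) (hq p hpU)
  have hcount : (⋃ U ∈ TopologicalSpace.countableBasis X, minValues U).Countable :=
    (TopologicalSpace.countable_countableBasis X).biUnion fun U _ => (hsub U).countable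
  refine hcount.mono ?_
  rintro _ ⟨p, hp, rfl⟩
  obtain ⟨U, hU, hpU, hUmin⟩ := (TopologicalSpace.isBasis_countableBasis X).mem_nhds_iff.1 hp
  exact mem_biUnion hU ⟨p, ⟨hpU, hUmin⟩, rfl⟩

section LastCrossing

variable {X : Type*} [ConditionallyCompleteLinearOrder X] [TopologicalSpace X] [OrderTopology X]
  [DenselyOrdered X] {x y : X}

theorem exists_mem_Ioo_eq_and_forall_Ioc_lt {Y : Type*} [LinearOrder Y] [TopologicalSpace Y]
    [OrderClosedTopology Y] {h : X → Y} {c : Y} (hxy : x ≤ y) (hh : ContinuousOn h (Icc x y))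
    (hxc : h x < c) (hcy : c < h y) : ∃ p ∈ Ioo x y, h p = c ∧ ∀ t ∈ Ioc p y, c < h t := by
  have hcompact : IsCompact (Icc x y ∩ h ⁻¹' Iic c) :=
    isCompact_Icc.of_isClosed_subset (hh.preimage_isClosed_of_isClosed isClosed_Icc isClosed_Iic)
      inter_subset_left
  obtain ⟨p, ⟨hpI, hpc : h p ≤ c⟩, hpmax⟩ := hcompact.exists_isGreatest ⟨x, ⟨le_rfl, hxy⟩, hxc.le⟩
  have hgt : ∀ t ∈ Ioc p y, c < h t := fun t ht =>
    lt_of_not_ge fun hle => (hpmax ⟨⟨hpI.1.trans ht.1.le, ht.2⟩, hle⟩).not_gt ht.1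
  obtain ⟨q, hq, hqc⟩ :=
    intermediate_value_Icc hpI.2 (hh.mono (Icc_subset_Icc_left hpI.1)) ⟨hpc, hcy.le⟩
  obtain rfl : p = q := hq.1.eq_of_not_lt fun hlt => (hgt q ⟨hlt, hq.2⟩).ne' hqc
  have hxp : x ≠ p := by rintro rfl; exact hxc.ne hqc
  have hpy : p ≠ y := by rintro rfl; exact hcy.ne' hqc
  exact ⟨p, ⟨hpI.1.lt_of_ne hxp, hpI.2.lt_of_ne hpy⟩, hqc, hgt⟩

theorem le_of_frequently_nhdsGT_le_or_eventually_nhdsLT_ge [SecondCountableTopology X] {h : X → ℝ}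
    (hxy : x ≤ y) (hh : ContinuousOn h (Icc x y))
    (hloc : ∀ p ∈ Ioo x y, (∃ᶠ t in 𝓝[>] p, h t ≤ h p) ∨ ∀ᶠ t in 𝓝[<] p, h p ≤ h t) :
    h y ≤ h x := by
  by_contra! hlt
  refine Cardinal.Real.Ioo_countable_iff.not.2 hlt.not_ge
    ((countable_image_setOf_isLocalMin h).mono fun c hc => ?_)
  obtain ⟨p, hp, rfl, hgt⟩ := exists_mem_Ioo_eq_and_forall_Ioc_lt hxy hh hc.1 hc.2
  have hright : ∀ᶠ t in 𝓝[>] p, h p < h t := mem_of_superset (Ioc_mem_nhdsGT hp.2) hgt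
  have hleft : ∀ᶠ t in 𝓝[<] p, h p ≤ h t := (hloc p hp).resolve_left fun hfreq =>
    hfreq (hright.mono fun _ => not_le_of_gt)
  have hmin : IsLocalMin h p := by
    rw [IsLocalMin, IsMinFilter, ← nhdsNE_sup_pure, ← nhdsLT_sup_nhdsGT]
    exact eventually_sup.2
      ⟨eventually_sup.2 ⟨hleft, hright.mono fun _ => le_of_lt⟩, eventually_pure.2 le_rfl⟩
  exact ⟨p, hmin, rfl⟩

end LastCrossing

section MeanValue

variable {f : ℝ → ℝ} {x y m M : ℝ}

theorem slope_le_of_exists_hasDerivWithinAt_le (hxy : x < y) (hf : ContinuousOn f (Icc x y))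
    (hd : ∀ p ∈ Ioo x y, ∃ c ≤ M, HasDerivWithinAt f c (Ioi p) p ∨ HasDerivWithinAt f c (Iio p) p) :
    slope f x y ≤ M := by
  refine le_of_forall_gt_imp_ge_of_dense fun K hK => ?_
  have hle : f y - K * y ≤ f x - K * x := by
    refine le_of_frequently_nhdsGT_le_or_eventually_nhdsLT_ge (h := fun t => f t - K * t)
      hxy.le (by fun_prop) fun p hp => ?_
    obtain ⟨c, hc, hr | hl⟩ := hd p hp
    · refine .inl (Eventually.frequently ?_)
      filter_upwards [hr.limsup_slope_le' self_notMem_Ioi (hc.trans_lt hK), self_mem_nhdsWithin]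
        with t hslope (hpt : p < t)
      rw [slope_def_field, div_lt_iff₀ (sub_pos.2 hpt)] at hslope
      linarith
    · refine .inr ?_
      filter_upwards [hl.limsup_slope_le' self_notMem_Iio (hc.trans_lt hK), self_mem_nhdsWithin]
        with t hslope (htp : t < p)
      rw [slope_def_field, div_lt_iff_of_neg (sub_neg.2 htp)] at hslope
      linarith
  rw [slope_def_field, div_le_iff₀ (sub_pos.2 hxy)]
  linarith

theorem le_slope_of_exists_hasDerivWithinAt_ge (hxy : x < y) (hf : ContinuousOn f (Icc x y))
    (hd : ∀ p ∈ Ioo x y, ∃ c ≥ m, HasDerivWithinAt f c (Ioi p) p ∨ HasDerivWithinAt f c (Iio p) p) :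
    m ≤ slope f x y := by
  rw [← neg_le_neg_iff, ← slope_neg]
  refine slope_le_of_exists_hasDerivWithinAt_le hxy hf.neg fun p hp => ?_
  obtain ⟨c, hc, h⟩ := hd p hp
  exact ⟨-c, neg_le_neg hc, h.imp .fun_neg .fun_neg⟩

theorem slope_mem_Icc_of_hasSpecDerivAt {g : ℝ → ℝ} (hxy : x ≠ y)
    (hf : ContinuousOn f (uIcc x y))
    (hg : ∀ p ∈ uIoo x y, HasSpecDerivAt f p (g p) ∧ g p ∈ Icc m M) :
    slope f x y ∈ Icc m M := by
  wlog hlt : x < y generalizing x y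
  · rw [slope_comm]
    rw [uIcc_comm] at hf
    rw [uIoo_comm] at hg
    exact this hxy.symm hf hg (hxy.lt_or_gt.resolve_left hlt)
  rw [uIcc_of_lt hlt] at hf
  rw [uIoo_of_lt hlt] at hg
  refine ⟨le_slope_of_exists_hasDerivWithinAt_ge hlt hf fun p hp => ?_,
    slope_le_of_exists_hasDerivWithinAt_le hlt hf fun p hp => ?_⟩
  all_goals
    obtain ⟨hspec, hm, hM⟩ := hg p hp
    have hfp := hf.continuousAt (Icc_mem_nhds hp.1 hp.2)
  · obtain ⟨c, hc, h⟩ := hspec.exists_ge_hasDerivWithinAt hfp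
    exact ⟨c, hm.trans hc, h⟩
  · obtain ⟨c, hc, h⟩ := hspec.exists_le_hasDerivWithinAt hfp
    exact ⟨c, hc.trans hM, h⟩

end MeanValue

theorem hasDerivAt_of_tendsto_specDeriv {f g : ℝ → ℝ} {x L : ℝ}
    (hf : ∀ᶠ y in 𝓝 x, ContinuousAt f y) (hspec : ∀ᶠ y in 𝓝[≠] x, HasSpecDerivAt f y (g y))
    (hg : Tendsto g (𝓝[≠] x) (𝓝 L)) : HasDerivAt f L x := by
  rw [hasDerivAt_iff_tendsto_slope, (nhds_basis_Icc_pos L).tendsto_right_iff]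
  intro ε hε
  have hnear : ∀ᶠ p in 𝓝 x, ContinuousAt f p ∧
      (p ≠ x → HasSpecDerivAt f p (g p) ∧ g p ∈ Icc (L - ε) (L + ε)) :=
    hf.and <| eventually_nhdsWithin_iff.1 <|
      hspec.and (hg.eventually_mem ((nhds_basis_Icc_pos L).mem_of_mem hε))
  obtain ⟨δ, hδ, hball⟩ := Metric.eventually_nhds_iff_ball.1 hnear
  filter_upwards [self_mem_nhdsWithin, mem_nhdsWithin_of_mem_nhds (Metric.ball_mem_nhds x hδ)]
    with y hyx hy
  have hsub : uIcc x y ⊆ Metric.ball x δ :=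
    (convex_ball x δ).ordConnected.uIcc_subset (Metric.mem_ball_self hδ) hy
  refine slope_mem_Icc_of_hasSpecDerivAt (Ne.symm hyx)
    (fun p hp => (hball p (hsub hp)).1.continuousWithinAt)
    fun p hp => (hball p (hsub (uIoo_subset_uIcc_self hp))).2 ?_
  rintro rfl
  exact left_notMem_uIoo hp

theorem differentiable_of_second_order_specular_general {f g : ℝ → ℝ} {s : Set ℝ} {x L : ℝ}
    (hs : IsOpen s) (hcont : ContinuousOn f s) (hspec : ∀ y ∈ s, HasSpecDerivAt f y (g y))
    (hx : x ∈ s) (hg : Tendsto g (𝓝[≠] x) (𝓝 L)) : HasDerivAt f (g x) x := by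
  have hnhds : ∀ᶠ y in 𝓝 x, y ∈ s := hs.mem_nhds hx
  have hderiv : HasDerivAt f L x := hasDerivAt_of_tendsto_specDeriv
    (hnhds.mono fun y hy => hcont.continuousAt (hs.mem_nhds hy))
    ((hnhds.mono hspec).filter_mono nhdsWithin_le_nhds) hg
  rwa [(hspec x hx).eq_of_hasDerivAt hderiv]

theorem differentiable_of_second_order_specular (f g : ℝ → ℝ) (a b : ℝ)
    (hcont : ContinuousOn f (Set.Ioo a b))
    (hspec : ∀ x ∈ Set.Ioo a b, HasSpecDerivAt f x (g x))
    (hspec2 : ∀ x ∈ Set.Ioo a b, SpecDifferentiableAt g x) :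
    ∀ x ∈ Set.Ioo a b, HasDerivAt f (g x) x := by
  intro x hx
  obtain ⟨L, hL⟩ := (hspec2 x hx).exists_tendsto_nhdsNE
  exact differentiable_of_second_order_specular_general isOpen_Ioo hcont hspec hx hL
end

section
/- (Fundamental Theorem of Calculus with specular derivatives) Let a < b and f : ℝ → ℝ. Suppose there is a finite set S ⊂ (a, b) such that f is continuous at every point of [a, b] \ S (one-sidedly at a and b), at every s ∈ S the one-sided limits f(s] and f[s) exist as real numbers, and for every x ∈ (a, b) the hypothesis (H1) holds: f(x) = A(f[x), f(x]). Define F(x) := ∫ₐˣ f(t) dt. Then: (i) F is continuous on [a, b]; (ii) for every x ∈ (a, b), F is specularly differentiable at x with F^S(x) = f(x); and (iii) F^S₊(a) = f(a) and F^S₋(b) = f(b). -/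
open Filter Topology Set

/-!
The integrand is regulated on `[a, b]`. Left or right of a point `x`, a regulated function is
nearly constant close to `x`, so the points where its oscillation exceeds a given `ε > 0` are
isolated; hence a regulated function has only countably many discontinuities, and it is integrable
on compact sets. The one-sided derivatives of its primitive at `x` are then the one-sided limits
`f[x)` and `f(x]`, which `A` combines to `f x` by (H1).
-/

open MeasureTheory

open scoped ENNReal

section Regulated

variable {X Y : Type*} [TopologicalSpace X]

/-- `f` is regulated on `s`: within `s`, it has a left and a right limit at every point of `s`.
This is what makes `f` integrable on compact sets and its primitive one-sidedly differentiable. The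
limits are taken inside `s`, so at an endpoint of an interval the outer one is vacuous. -/
def RegulatedOn [Preorder X] [TopologicalSpace Y] (f : X → Y) (s : Set X) : Prop :=
  ∀ x ∈ s, (∃ l, Tendsto f (𝓝[s ∩ Iio x] x) (𝓝 l)) ∧ ∃ r, Tendsto f (𝓝[s ∩ Ioi x] x) (𝓝 r)

theorem regulatedOn_Icc [PartialOrder X] [TopologicalSpace Y] {f : X → Y} {a b : X}
    (ha : ContinuousWithinAt f (Icc a b) a) (hb : ContinuousWithinAt f (Icc a b) b)
    (h : ∀ x ∈ Ioo a b, (∃ l, Tendsto f (𝓝[<] x) (𝓝 l)) ∧ ∃ r, Tendsto f (𝓝[>] x) (𝓝 r)) :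
    RegulatedOn f (Icc a b) := by
  intro x hx
  rcases eq_endpoints_or_mem_Ioo_of_mem_Icc hx with rfl | rfl | hx
  · exact ⟨⟨f x, ha.mono inter_subset_left⟩, ⟨f x, ha.mono inter_subset_left⟩⟩
  · exact ⟨⟨f x, hb.mono inter_subset_left⟩, ⟨f x, hb.mono inter_subset_left⟩⟩
  · obtain ⟨⟨l, hl⟩, ⟨r, hr⟩⟩ := h x hx
    exact ⟨⟨l, hl.mono_left (nhdsWithin_mono x inter_subset_right)⟩,
      ⟨r, hr.mono_left (nhdsWithin_mono x inter_subset_right)⟩⟩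

theorem nhdsWithin_eq_pure_sup_inter_Iio_sup_inter_Ioi [LinearOrder X] {s : Set X} {x : X}
    (hx : x ∈ s) : 𝓝[s] x = pure x ⊔ (𝓝[s ∩ Iio x] x ⊔ 𝓝[s ∩ Ioi x] x) := by
  rw [← nhdsWithin_union, ← inter_union_distrib_left, Iio_union_Ioi, ← nhdsWithin_insert,
    ← sdiff_eq, insert_sdiff_self_of_mem hx]

theorem eventually_oscillationWithin_le [PseudoEMetricSpace Y] {f : X → Y} {s u : Set X} {x : X}
    {l : Y} {ε : ℝ≥0∞} (hu : IsOpen u) (h : Tendsto f (𝓝[s ∩ u] x) (𝓝 l)) (hε : 0 < ε) :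
    ∀ᶠ y in 𝓝[s ∩ u] x, oscillationWithin f s y ≤ ε := by
  have hball : ∀ᶠ y in 𝓝[s ∩ u] x, f y ∈ Metric.eball l (ε / 2) :=
    h.eventually_mem (Metric.eball_mem_nhds l (ENNReal.half_pos hε.ne'))
  filter_upwards [eventually_eventually_nhdsWithin.2 hball, self_mem_nhdsWithin] with y hy hyu
  rw [nhdsWithin_inter_of_mem' (mem_nhdsWithin_of_mem_nhds (hu.mem_nhds hyu.2))] at hy
  calc oscillationWithin f s y ≤ Metric.ediam (Metric.eball l (ε / 2)) := biInf_le _ hy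
    _ ≤ 2 * (ε / 2) := Metric.ediam_eball_le
    _ = ε := ENNReal.mul_div_cancel two_ne_zero ENNReal.ofNat_ne_top

theorem RegulatedOn.isDiscrete_lt_oscillationWithin [LinearOrder X] [OrderClosedTopology X]
    [PseudoEMetricSpace Y] {f : X → Y} {s : Set X} (h : RegulatedOn f s) {ε : ℝ≥0∞} (hε : 0 < ε) :
    IsDiscrete {x ∈ s | ε < oscillationWithin f s x} := by
  refine .of_nhdsWithin fun x hx => ?_
  obtain ⟨⟨l, hl⟩, ⟨r, hr⟩⟩ := h x hx.1
  have hne : ∀ᶠ y in 𝓝[s ∩ Iio x] x ⊔ 𝓝[s ∩ Ioi x] x, oscillationWithin f s y ≤ ε :=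
    eventually_sup.2 ⟨eventually_oscillationWithin_le isOpen_Iio hl hε,
      eventually_oscillationWithin_le isOpen_Ioi hr hε⟩
  have heq : ∀ᶠ y in 𝓝[s] x, y = x ∨ oscillationWithin f s y ≤ ε := by
    rw [nhdsWithin_eq_pure_sup_inter_Iio_sup_inter_Ioi hx.1]
    exact eventually_sup.2 ⟨eventually_pure.2 (.inl rfl), hne.mono fun _ => .inr⟩
  rw [le_pure_iff]
  filter_upwards [nhdsWithin_mono x (sep_subset s _) heq, self_mem_nhdsWithin] with y hy hys
  exact hy.resolve_right hys.2.not_ge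

theorem RegulatedOn.countable_not_continuousWithinAt [LinearOrder X] [OrderClosedTopology X]
    [SecondCountableTopology X] [PseudoEMetricSpace Y] {f : X → Y} {s : Set X}
    (h : RegulatedOn f s) : {x ∈ s | ¬ContinuousWithinAt f s x}.Countable := by
  have hcount (n : ℕ) : {x ∈ s | (n : ℝ≥0∞)⁻¹ < oscillationWithin f s x}.Countable :=
    (HereditarilyLindelofSpace.isLindelof _).countable_of_isDiscrete
      (h.isDiscrete_lt_oscillationWithin (ENNReal.inv_pos.2 (ENNReal.natCast_ne_top n)))
  refine (countable_iUnion hcount).mono fun x ⟨hxs, hx⟩ => mem_iUnion.2 ?_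
  rw [← OscillationWithin.eq_zero_iff_continuousWithinAt f hxs] at hx
  exact (ENNReal.exists_inv_nat_lt hx).imp fun n hn => ⟨hxs, hn⟩

end Regulated

section Integrable

variable {X E : Type*} [TopologicalSpace X] [MeasurableSpace X] {μ : Measure X} {s : Set X}

theorem aestronglyMeasurable_of_countable_not_continuousWithinAt [OpensMeasurableSpace X]
    [MeasurableSingletonClass X] [SecondCountableTopology X] [TopologicalSpace E]
    [TopologicalSpace.PseudoMetrizableSpace E] {f : X → E} (hs : MeasurableSet s)
    (hf : {x ∈ s | ¬ContinuousWithinAt f s x}.Countable) :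
    AEStronglyMeasurable f (μ.restrict s) := by
  have hdisc : {x : s | ¬ContinuousAt (f ∘ (↑)) x}.Countable := by
    refine (hf.preimage Subtype.val_injective).mono fun x hx => ?_
    exact ⟨x.2, mt (continuousWithinAt_iff_continuousAt_domRestrict f x.2).1 hx⟩
  rw [← map_comap_subtype_coe hs, (MeasurableEmbedding.subtype_coe hs).aestronglyMeasurable_map_iff]
  exact (StronglyMeasurable.of_countable_not_continuousAt hdisc).aestronglyMeasurable

variable [LinearOrder X] [OrderClosedTopology X] [SecondCountableTopology X]
  [OpensMeasurableSpace X] [NormedAddCommGroup E] {f : X → E}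

theorem RegulatedOn.locallyIntegrableOn [IsLocallyFiniteMeasure μ] (h : RegulatedOn f s)
    (hs : MeasurableSet s) : LocallyIntegrableOn f s μ := by
  have hmeas : AEStronglyMeasurable f (μ.restrict s) :=
    aestronglyMeasurable_of_countable_not_continuousWithinAt hs h.countable_not_continuousWithinAt
  have hside {x : X} {u : Set X} {c : E} (hu : MeasurableSet u)
      (hc : Tendsto f (𝓝[s ∩ u] x) (𝓝 c)) : IntegrableAtFilter f (𝓝[s ∩ u] x) μ :=
    have := (hs.inter hu).nhdsWithin_isMeasurablyGenerated x
    hc.integrableAtFilter ⟨s, nhdsWithin_mono x inter_subset_left self_mem_nhdsWithin, hmeas⟩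
      (μ.finiteAt_nhdsWithin x _)
  intro x hx
  obtain ⟨⟨l, hl⟩, ⟨r, hr⟩⟩ := h x hx
  rw [nhdsWithin_eq_pure_sup_inter_Iio_sup_inter_Ioi hx, IntegrableAtFilter.sup_iff,
    IntegrableAtFilter.sup_iff]
  have hpoint : IntegrableAtFilter f (pure x) μ := 
    ⟨{x}, mem_pure.2 rfl, integrableOn_singleton (hx := isCompact_singleton.measure_lt_top)⟩
  exact ⟨hpoint, hside measurableSet_Iio hl, hside measurableSet_Ioi hr⟩

theorem RegulatedOn.integrableOn [IsLocallyFiniteMeasure μ] (h : RegulatedOn f s)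
    (hs : IsCompact s) : IntegrableOn f s μ :=
  (h.locallyIntegrableOn hs.measurableSet).integrableOn_isCompact hs

end Integrable

section Primitive

variable {E : Type*} [NormedAddCommGroup E] [NormedSpace ℝ E] [CompleteSpace E] {f : ℝ → E}
  {a b x : ℝ} {c : E}

theorem hasDerivWithinAt_Ioi_integral (hf : IntegrableOn f (Icc a b)) (hx : x ∈ Ico a b)
    (hc : Tendsto f (𝓝[>] x) (𝓝 c)) :
    HasDerivWithinAt (fun u => ∫ t in a..u, f t) c (Ioi x) x := by
  have hint : IntervalIntegrable f volume a x :=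
    (intervalIntegrable_iff_integrableOn_Icc_of_le hx.1).2
      (hf.mono_set (Icc_subset_Icc_right hx.2.le))
  have hmeas : StronglyMeasurableAtFilter f (𝓝[>] x) :=
    ⟨Icc a b, Icc_mem_nhdsGT_of_mem hx, hf.aestronglyMeasurable⟩
  exact (intervalIntegral.integral_hasDerivWithinAt_of_tendsto_ae_right (s := Ici x) hint hmeas
    (hc.mono_left inf_le_left)).mono Ioi_subset_Ici_self

theorem hasDerivWithinAt_Iio_integral (hf : IntegrableOn f (Icc a b)) (hx : x ∈ Ioc a b)
    (hc : Tendsto f (𝓝[<] x) (𝓝 c)) :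
    HasDerivWithinAt (fun u => ∫ t in a..u, f t) c (Iio x) x := by
  have hint : IntervalIntegrable f volume a x :=
    (intervalIntegrable_iff_integrableOn_Icc_of_le hx.1.le).2
      (hf.mono_set (Icc_subset_Icc_right hx.2))
  have hmeas : StronglyMeasurableAtFilter f (𝓝[≤] x) :=
    ⟨Icc a b, Icc_mem_nhdsLE_of_mem hx, hf.aestronglyMeasurable⟩
  have hle : 𝓝[≤] x ⊓ ae volume ≤ 𝓝[<] x := by
    rw [← Iic_sdiff_right, sdiff_eq, nhdsWithin_inter']
    exact inf_le_inf_left _ (le_principal_iff.2 (compl_mem_ae_iff.2 (measure_singleton x)))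
  exact (intervalIntegral.integral_hasDerivWithinAt_of_tendsto_ae_right (s := Iic x) hint hmeas
    (hc.mono_left hle)).mono Iio_subset_Iic_self

end Primitive

theorem tendsto_sub_div_sub_of_hasDerivWithinAt {𝕜 : Type*} [NontriviallyNormedField 𝕜]
    {f : 𝕜 → 𝕜} {s : Set 𝕜} {f' x : 𝕜} (h : HasDerivWithinAt f f' s x) (hx : x ∉ s) :
    Tendsto (fun y => (f y - f x) / (y - x)) (𝓝[s] x) (𝓝 f') := by
  simpa only [slope_fun_def_field] using (hasDerivWithinAt_iff_tendsto_slope' hx).1 h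

theorem hasSpecData_of_hasDerivWithinAt {f : ℝ → ℝ} {x α β : ℝ}
    (hα : HasDerivWithinAt f α (Ioi x) x) (hβ : HasDerivWithinAt f β (Iio x) x) :
    HasSpecData f x (f x) α β :=
  ⟨hβ.continuousWithinAt, hα.continuousWithinAt,
    tendsto_sub_div_sub_of_hasDerivWithinAt hα self_notMem_Ioi,
    tendsto_sub_div_sub_of_hasDerivWithinAt hβ self_notMem_Iio⟩

theorem ftc_specular_general (f : ℝ → ℝ) (a b : ℝ) (hab : a < b)
    (ha : ContinuousWithinAt f (Icc a b) a) (hb : ContinuousWithinAt f (Icc a b) b)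
    (hH1 : ∀ x ∈ Ioo a b, ∃ l r, Tendsto f (𝓝[<] x) (𝓝 l) ∧
      Tendsto f (𝓝[>] x) (𝓝 r) ∧ f x = specA r l) :
    ContinuousOn (fun x => ∫ t in a..x, f t) (Icc a b) ∧
      (∀ x ∈ Ioo a b, HasSpecDerivAt (fun y => ∫ t in a..y, f t) x (f x)) ∧
      (∃ R, Tendsto (fun x => ∫ t in a..x, f t) (𝓝[>] a) (𝓝 R) ∧
        Tendsto (fun x => ((∫ t in a..x, f t) - R) / (x - a)) (𝓝[>] a) (𝓝 (f a))) ∧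
      (∃ L, Tendsto (fun x => ∫ t in a..x, f t) (𝓝[<] b) (𝓝 L) ∧
        Tendsto (fun x => ((∫ t in a..x, f t) - L) / (x - b)) (𝓝[<] b) (𝓝 (f b))) := by
  have hreg : RegulatedOn f (Icc a b) := regulatedOn_Icc ha hb fun x hx =>
    let ⟨l, r, hl, hr, _⟩ := hH1 x hx
    ⟨⟨l, hl⟩, ⟨r, hr⟩⟩
  have hint : IntegrableOn f (Icc a b) := hreg.integrableOn isCompact_Icc
  refine ⟨?_, fun x hx => ?_, ?_, ?_⟩
  · rw [← uIcc_of_le hab.le] at hint ⊢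
    exact intervalIntegral.continuousOn_primitive_interval hint
  · obtain ⟨l, r, hl, hr, hfx⟩ := hH1 x hx
    exact ⟨_, r, l, hasSpecData_of_hasDerivWithinAt
      (hasDerivWithinAt_Ioi_integral hint (Ioo_subset_Ico_self hx) hr)
      (hasDerivWithinAt_Iio_integral hint (Ioo_subset_Ioc_self hx) hl), hfx⟩
  · have hF := hasDerivWithinAt_Ioi_integral hint (left_mem_Ico.2 hab)
      (ha.mono_left (nhdsWithin_le_of_mem (Icc_mem_nhdsGT hab)))
    exact ⟨_, hF.continuousWithinAt, tendsto_sub_div_sub_of_hasDerivWithinAt hF self_notMem_Ioi⟩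
  · have hF := hasDerivWithinAt_Iio_integral hint (right_mem_Ioc.2 hab)
      (hb.mono_left (nhdsWithin_le_of_mem (Icc_mem_nhdsLT hab)))
    exact ⟨_, hF.continuousWithinAt, tendsto_sub_div_sub_of_hasDerivWithinAt hF self_notMem_Iio⟩

theorem ftc_specular (f : ℝ → ℝ) (a b : ℝ) (hab : a < b) (S : Finset ℝ)
    (hS : ↑S ⊆ Set.Ioo a b)
    (hcont : ∀ x ∈ Set.Icc a b \ ↑S, ContinuousWithinAt f (Set.Icc a b) x)
    (hjump : ∀ s ∈ S, (∃ l, Tendsto f (𝓝[<] s) (𝓝 l)) ∧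
      (∃ r, Tendsto f (𝓝[>] s) (𝓝 r)))
    (hH1 : ∀ x ∈ Set.Ioo a b, ∃ l r, Tendsto f (𝓝[<] x) (𝓝 l) ∧
      Tendsto f (𝓝[>] x) (𝓝 r) ∧ f x = specA r l) :
    ContinuousOn (fun x => ∫ t in a..x, f t) (Set.Icc a b) ∧
      (∀ x ∈ Set.Ioo a b, HasSpecDerivAt (fun y => ∫ t in a..y, f t) x (f x)) ∧
      (∃ R, Tendsto (fun x => ∫ t in a..x, f t) (𝓝[>] a) (𝓝 R) ∧
        Tendsto (fun x => ((∫ t in a..x, f t) - R) / (x - a)) (𝓝[>] a) (𝓝 (f a))) ∧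
      (∃ L, Tendsto (fun x => ∫ t in a..x, f t) (𝓝[<] b) (𝓝 L) ∧
        Tendsto (fun x => ((∫ t in a..x, f t) - L) / (x - b)) (𝓝[<] b) (𝓝 (f b))) :=
  ftc_specular_general f a b hab
    (hcont a ⟨left_mem_Icc.2 hab.le, fun ha => left_notMem_Ioo (hS ha)⟩)
    (hcont b ⟨right_mem_Icc.2 hab.le, fun hb => right_notMem_Ioo (hS hb)⟩) hH1
end
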